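/- Let f : ℝ^d → ℝ be L-smooth, let μ > 0, and let f_μ be its Gaussian smoothing. Then for every x ∈ ℝ^d, ‖∇f_μ(x) − ∇f(x)‖² ≤ μ² L² (d + 3)³ / 4. -/

import Mathlib

open MeasureTheory ProbabilityTheory

/-- The standard multivariate Gaussian distribution `N(0, I_d)` on `ℝ^d`. -/
noncomputable def stdGaussian (d : ℕ) : Measure (EuclideanSpace ℝ (Fin d)) :=
  (Measure.pi fun _ : Fin d => gaussianReal 0 1).map
    (MeasurableEquiv.toLp 2 (Fin d → ℝ))

section Smoothing

open scoped NNReal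

variable {E : Type*} [NormedAddCommGroup E] [NormedSpace ℝ E]

/-- A function with `K`-Lipschitz derivative grows at most quadratically. -/
lemma norm_sub_le_of_lipschitzWith_fderiv {f : E → ℝ} {K : ℝ≥0}
    (hf : Differentiable ℝ f) (hK : LipschitzWith K (fderiv ℝ f)) (x v : E) :
    ‖f (x + v) - f x‖ ≤ ‖fderiv ℝ f x‖ * ‖v‖ + K * ‖v‖ ^ 2 := by
  have key : ‖f (x + v) - f x‖ ≤ (‖fderiv ℝ f x‖ + K * ‖v‖) * ‖x + v - x‖ := by
    refine Convex.norm_image_sub_le_of_norm_fderiv_le (𝕜 := ℝ)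
      (s := Metric.closedBall x ‖v‖) (fun y _ => hf y) (fun y hy => ?_)
      (convex_closedBall x ‖v‖) (Metric.mem_closedBall_self (norm_nonneg v)) (by simp)
    have h₁ : ‖fderiv ℝ f y - fderiv ℝ f x‖ ≤ K * ‖y - x‖ := hK.norm_sub_le y x
    have h₂ : (K : ℝ) * ‖y - x‖ ≤ K * ‖v‖ := by
      gcongr
      exact mem_closedBall_iff_norm.1 hy
    linarith [norm_le_norm_add_norm_sub (fderiv ℝ f x) (fderiv ℝ f y),
      norm_sub_rev (fderiv ℝ f x) (fderiv ℝ f y)]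
  rw [add_sub_cancel_left] at key
  linarith

variable [MeasurableSpace E] [BorelSpace E] [SecondCountableTopology E]

/-- Smoothing a function with Lipschitz derivative by a distribution with finite second moment
commutes with differentiation. -/
lemma hasFDerivAt_integral_comp_add_smul {f : E → ℝ} {K : ℝ≥0}
    (hf : Differentiable ℝ f) (hK : LipschitzWith K (fderiv ℝ f))
    (P : Measure E) [IsProbabilityMeasure P] (hP : MemLp id 2 P) (c : ℝ) (x : E) :
    Integrable (fun u => fderiv ℝ f (x + c • u)) P ∧
      HasFDerivAt (fun y => ∫ u, f (y + c • u) ∂P) (∫ u, fderiv ℝ f (x + c • u) ∂P) x := by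
  have hnorm : Integrable (fun u : E => ‖u‖) P := (hP.integrable one_le_two).norm
  have hsq : Integrable (fun u : E => ‖u‖ ^ 2) P := hP.integrable_norm_pow two_ne_zero
  have hfm (y : E) : AEStronglyMeasurable (fun u => f (y + c • u)) P :=
    (hf.continuous.comp (by fun_prop)).aestronglyMeasurable
  have hfm' : AEStronglyMeasurable (fun u => fderiv ℝ f (x + c • u)) P :=
    (hK.continuous.comp (by fun_prop)).aestronglyMeasurable
  have hint : Integrable (fun u => f (x + c • u)) P := by
    refine Integrable.mono' (((hnorm.const_mul (‖fderiv ℝ f x‖ * |c|)).add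
      (hsq.const_mul (K * |c| ^ 2))).add (integrable_const ‖f x‖)) (hfm x)
      (Filter.Eventually.of_forall fun u => ?_)
    have h := norm_sub_le_of_lipschitzWith_fderiv hf hK x (c • u)
    rw [norm_smul, Real.norm_eq_abs c] at h
    have h' := norm_sub_norm_le (f (x + c • u)) (f x)
    simp only [Pi.add_apply]
    linarith
  have hbound (u y : E) (hy : y ∈ Metric.ball x 1) :
      ‖fderiv ℝ f (y + c • u)‖ ≤ ‖fderiv ℝ f x‖ + K * (1 + |c| * ‖u‖) := by
    have h₁ : ‖fderiv ℝ f (y + c • u) - fderiv ℝ f x‖ ≤ K * ‖y + c • u - x‖ :=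
      hK.norm_sub_le _ _
    have h₂ : ‖y + c • u - x‖ ≤ 1 + |c| * ‖u‖ := by
      rw [add_sub_right_comm, ← Real.norm_eq_abs, ← norm_smul]
      exact (norm_add_le _ _).trans (by gcongr; exact (mem_ball_iff_norm.1 hy).le)
    have h₃ : (K : ℝ) * ‖y + c • u - x‖ ≤ K * (1 + |c| * ‖u‖) := by gcongr
    linarith [norm_sub_norm_le (fderiv ℝ f (y + c • u)) (fderiv ℝ f x)]
  have hboundint : Integrable (fun u : E => ‖fderiv ℝ f x‖ + K * (1 + |c| * ‖u‖)) P := by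
    fun_prop
  refine ⟨hboundint.mono' hfm' (Filter.Eventually.of_forall fun u =>
      hbound u x (Metric.mem_ball_self one_pos)), ?_⟩
  refine hasFDerivAt_integral_of_dominated_of_fderiv_le (𝕜 := ℝ)
    (F' := fun y u => fderiv ℝ f (y + c • u)) (Metric.ball_mem_nhds x one_pos)
    (Filter.Eventually.of_forall hfm) hint hfm' (Filter.Eventually.of_forall hbound) hboundint
    (Filter.Eventually.of_forall fun u y _ => ?_)
  exact (hasFDerivAt_comp_add_right (c • u)).2 (hf (y + c • u)).hasFDerivAt

/-- The derivative of the smoothed function differs from that of the original function by at most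
the Lipschitz constant times the scaled root mean square of the smoothing distribution. -/
lemma norm_fderiv_integral_comp_add_smul_sub_sq_le {f : E → ℝ} {K : ℝ≥0}
    (hf : Differentiable ℝ f) (hK : LipschitzWith K (fderiv ℝ f))
    (P : Measure E) [IsProbabilityMeasure P] (hP : MemLp id 2 P) (c : ℝ) (x : E) :
    ‖fderiv ℝ (fun y => ∫ u, f (y + c • u) ∂P) x - fderiv ℝ f x‖ ^ 2 ≤
      c ^ 2 * K ^ 2 * ∫ u, ‖u‖ ^ 2 ∂P := by
  have hnorm : Integrable (fun u : E => ‖u‖) P := (hP.integrable one_le_two).norm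
  obtain ⟨hint, hderiv⟩ := hasFDerivAt_integral_comp_add_smul hf hK P hP c x
  have hsub : fderiv ℝ (fun y => ∫ u, f (y + c • u) ∂P) x - fderiv ℝ f x =
      ∫ u, (fderiv ℝ f (x + c • u) - fderiv ℝ f x) ∂P := by
    rw [hderiv.fderiv, integral_sub hint (integrable_const _)]
    simp
  have hle : ‖∫ u, (fderiv ℝ f (x + c • u) - fderiv ℝ f x) ∂P‖ ≤ K * |c| * ∫ u, ‖u‖ ∂P := by
    rw [← integral_const_mul]
    refine norm_integral_le_of_norm_le (hnorm.const_mul _) (Filter.Eventually.of_forall fun u => ?_)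
    have h : ‖fderiv ℝ f (x + c • u) - fderiv ℝ f x‖ ≤ K * ‖x + c • u - x‖ :=
      hK.norm_sub_le _ _
    rwa [add_sub_cancel_left, norm_smul, Real.norm_eq_abs, ← mul_assoc] at h
  have hjensen : (∫ u, ‖u‖ ∂P) ^ 2 ≤ ∫ u, ‖u‖ ^ 2 ∂P := by
    have h := variance_nonneg (fun u : E => ‖id u‖) P
    rw [variance_eq_sub hP.norm] at h
    simpa using h
  calc _ ≤ (K * |c| * ∫ u, ‖u‖ ∂P) ^ 2 := by rw [hsub]; gcongr
    _ = c ^ 2 * K ^ 2 * (∫ u, ‖u‖ ∂P) ^ 2 := by rw [mul_pow, mul_pow, sq_abs]; ring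
    _ ≤ _ := by gcongr

end Smoothing

lemma stdGaussian_eq_probabilityTheory_stdGaussian (d : ℕ) :
    _root_.stdGaussian d = ProbabilityTheory.stdGaussian (EuclideanSpace ℝ (Fin d)) :=
  map_pi_eq_stdGaussian

lemma integral_norm_sq_stdGaussian (d : ℕ) :
    ∫ u, ‖u‖ ^ 2 ∂(ProbabilityTheory.stdGaussian (EuclideanSpace ℝ (Fin d))) = d := by
  have hcoord (i : Fin d) : MemLp (fun u : EuclideanSpace ℝ (Fin d) => u i) 2
      (ProbabilityTheory.stdGaussian (EuclideanSpace ℝ (Fin d))) :=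
    (EuclideanSpace.proj (𝕜 := ℝ) i).comp_memLp' IsGaussian.memLp_two_id
  have hsq (i : Fin d) :
      ∫ u, u i ^ 2 ∂(ProbabilityTheory.stdGaussian (EuclideanSpace ℝ (Fin d))) = 1 := by
    have hmean := integral_strongDual_stdGaussian (EuclideanSpace.proj (𝕜 := ℝ) i)
    have h := variance_eval_multivariateGaussian (μ := (0 : EuclideanSpace ℝ (Fin d)))
      Matrix.PosSemidef.one i
    rw [multivariateGaussian_zero_one, variance_of_integral_eq_zero
      (hcoord i).aemeasurable hmean] at h
    simpa using h
  simp_rw [EuclideanSpace.real_norm_sq_eq]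
  rw [integral_finsetSum _ fun i _ => (hcoord i).integrable_sq]
  simp [hsq]

/-- The gradient of the Gaussian smoothing `f_μ` of an `L`-smooth function `f` satisfies
`‖∇f_μ(x) − ∇f(x)‖² ≤ μ² L² (d + 3)³ / 4`. -/
theorem gaussian_smoothing_gradient_bound
    (d : ℕ) (L μ : ℝ) (hμ : 0 < μ)
    (f : EuclideanSpace ℝ (Fin d) → ℝ)
    (hdiff : Differentiable ℝ f)
    (hlip : ∀ x y, ‖gradient f x - gradient f y‖ ≤ L * ‖x - y‖)
    (fμ : EuclideanSpace ℝ (Fin d) → ℝ)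
    (hfμ : ∀ x, fμ x = ∫ u, f (x + μ • u) ∂(stdGaussian d))
    (x : EuclideanSpace ℝ (Fin d)) :
    ‖gradient fμ x - gradient f x‖ ^ 2 ≤ μ ^ 2 * L ^ 2 * ((d : ℝ) + 3) ^ 3 / 4 := by
  have hgrad (g h : EuclideanSpace ℝ (Fin d) → ℝ) (y z : EuclideanSpace ℝ (Fin d)) :
      ‖gradient g y - gradient h z‖ = ‖fderiv ℝ g y - fderiv ℝ h z‖ := by
    rw [← toDual_gradient, ← toDual_gradient, ← map_sub, LinearIsometryEquiv.norm_map]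
  have hK : LipschitzWith (Real.nnabs L) (fderiv ℝ f) := by
    refine LipschitzWith.of_dist_le_mul fun y z => ?_
    rw [dist_eq_norm, dist_eq_norm, ← hgrad, Real.coe_nnabs]
    exact (hlip y z).trans (by gcongr; exact le_abs_self L)
  have hfun : fμ = fun y => ∫ u, f (y + μ • u)
      ∂(ProbabilityTheory.stdGaussian (EuclideanSpace ℝ (Fin d))) := by
    funext y
    rw [hfμ, stdGaussian_eq_probabilityTheory_stdGaussian]
  have hmain := norm_fderiv_integral_comp_add_smul_sub_sq_le hdiff hK
    (ProbabilityTheory.stdGaussian (EuclideanSpace ℝ (Fin d))) IsGaussian.memLp_two_id μ x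
  rw [← hfun, ← hgrad, integral_norm_sq_stdGaussian, Real.coe_nnabs, sq_abs] at hmain
  have hd : (d : ℝ) ≤ ((d : ℝ) + 3) ^ 3 / 4 := by
    have hd₀ : (0 : ℝ) ≤ d := d.cast_nonneg
    nlinarith [pow_nonneg hd₀ 2, pow_nonneg hd₀ 3]
  calc _ ≤ μ ^ 2 * L ^ 2 * d := hmain
    _ ≤ μ ^ 2 * L ^ 2 * (((d : ℝ) + 3) ^ 3 / 4) := by gcongr
    _ = _ := by ring
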